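/- For every ε > 0 there exists C_ε > 0 such that, uniformly in dyadic N, N₁, N₂, N₃ ≥ 1 and m ∈ ℤ, the operator norm of the base tensor h^{𝐍,(m)} viewed as a linear map from ℓ²((ℤ²)³) (variables (n₁, n₂, n₃)) to ℓ²(ℤ²) (variable n), i.e. the map sending f to n ↦ ∑_{n₁,n₂,n₃} h^{𝐍,(m)}(n, n₁, n₂, n₃) f(n₁, n₂, n₃), is at most C_ε · min( N₂ (min(N₁, N₃))^ε, (N_med N_min)^{1/2 + ε} ), where N_max ≥ N_med ≥ N_min is the decreasing rearrangement of N₁, N₂, N₃. -/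

import Mathlib

/-- Euclidean norm of a lattice point in `ℤ²`. -/
noncomputable def znorm (n : ℤ × ℤ) : ℝ := Real.sqrt ((n.1 : ℝ) ^ 2 + (n.2 : ℝ) ^ 2)

/-- Squared Euclidean norm `|n|²` of `n ∈ ℤ²`, as an integer. -/
def nsq (n : ℤ × ℤ) : ℤ := n.1 ^ 2 + n.2 ^ 2

/-- `φ(n̄) = |n|² − |n₁|² + |n₂|² − |n₃|²`. -/
def phiFn (n n₁ n₂ n₃ : ℤ × ℤ) : ℤ := nsq n - nsq n₁ + nsq n₂ - nsq n₃

/-- `N` is a dyadic number: `N = 2^k` for some integer `k ≥ 0`. -/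
def IsDyadic (N : ℝ) : Prop := ∃ k : ℕ, N = 2 ^ k

/-- `|n| ∼ N`: for dyadic `N ≥ 2` this means `N/2 < |n| ≤ N`; for `N = 1` it means `|n| ≤ 1`. -/
def simDyadic (N : ℝ) (n : ℤ × ℤ) : Prop :=
  (N = 1 ∧ znorm n ≤ 1) ∨ (N ≠ 1 ∧ N / 2 < znorm n ∧ znorm n ≤ N)

/-- Membership in the set `S^{𝐍,(m)}`. -/
def SMem (N N₁ N₂ N₃ : ℝ) (m : ℤ) (n n₁ n₂ n₃ : ℤ × ℤ) : Prop :=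
  n = n₁ - n₂ + n₃ ∧ n ≠ n₁ ∧ n ≠ n₃ ∧ phiFn n n₁ n₂ n₃ = m ∧
    simDyadic N n ∧ simDyadic N₁ n₁ ∧ simDyadic N₂ n₂ ∧ simDyadic N₃ n₃ 

-- The base tensor `h^{𝐍,(m)}`: the `{0,1}`-valued indicator of `S^{𝐍,(m)}`.
open Classical in
noncomputable def hten (N N₁ N₂ N₃ : ℝ) (m : ℤ) (n n₁ n₂ n₃ : ℤ × ℤ) : ℝ :=
  if SMem N N₁ N₂ N₃ m n n₁ n₂ n₃ then 1 else 0

/-- Minimum of three reals. -/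
noncomputable def dmin3 (a b c : ℝ) : ℝ := min a (min b c)

/-- Maximum of three reals. -/
noncomputable def dmax3 (a b c : ℝ) : ℝ := max a (max b c)

/-- Median of three reals. -/
noncomputable def dmed3 (a b c : ℝ) : ℝ := a + b + c - dmax3 a b c - dmin3 a b c


theorem divisor_bound (ε : ℝ) (hε : 0 < ε) :
    ∃ C : ℝ, 1 ≤ C ∧ ∀ n : ℕ, n ≠ 0 → (n.divisors.card : ℝ) ≤ C * (n : ℝ) ^ ε := by
  obtain ⟨A, hA1, hA⟩ : ∃ A : ℝ, 1 ≤ A ∧ ∀ k : ℕ, ((k : ℝ) + 1) ≤ A * ((2 : ℝ) ^ ε) ^ k := by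
    have h2 : (1 : ℝ) < (2 : ℝ) ^ ε := Real.one_lt_rpow (by norm_num) hε
    set r := (2 : ℝ) ^ ε - 1 with hr
    have hr0 : 0 < r := by rw [hr]; linarith
    refine ⟨max 1 (1 / r), le_max_left _ _, fun k => ?_⟩
    have hb : 1 + (k : ℝ) * r ≤ (1 + r) ^ k := one_add_mul_le_pow (by linarith) k
    have e : (2 : ℝ) ^ ε = 1 + r := by rw [hr]; ring
    rw [e]
    have h1 : (1 : ℝ) ≤ max 1 (1 / r) := le_max_left _ _
    have h3 : 1 / r ≤ max 1 (1 / r) := le_max_right _ _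
    have h4 : 1 ≤ max 1 (1 / r) * r := by
      have := mul_le_mul_of_nonneg_right h3 hr0.le
      rwa [div_mul_cancel₀ _ hr0.ne'] at this
    have hk : (0 : ℝ) ≤ k := Nat.cast_nonneg k
    calc (k : ℝ) + 1 ≤ max 1 (1 / r) * (1 + (k : ℝ) * r) := by nlinarith
      _ ≤ _ := by gcongr
  obtain ⟨P, hP⟩ : ∃ P : ℕ, ∀ p : ℕ, P ≤ p → (2 : ℝ) ≤ (p : ℝ) ^ ε := by
    have := (tendsto_rpow_atTop hε).comp (tendsto_natCast_atTop_atTop (R := ℝ))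
    have := (this.eventually_ge_atTop 2)
    obtain ⟨P, hP⟩ := Filter.eventually_atTop.1 this
    exact ⟨P, hP⟩
  refine ⟨A ^ P, one_le_pow₀ hA1, fun n hn => ?_⟩
  have key : ∀ p ∈ n.primeFactors, ((n.factorization p : ℝ) + 1) ≤
      (if p < P then A else 1) * ((p : ℝ) ^ ε) ^ (n.factorization p) := by
    intro p hp
    have hpp := (Nat.prime_of_mem_primeFactors hp).two_le
    split_ifs with h
    · refine (hA _).trans ?_
      have : (2 : ℝ) ^ ε ≤ (p : ℝ) ^ ε :=
        Real.rpow_le_rpow (by norm_num) (by exact_mod_cast hpp) hε.le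
      gcongr
    · have h2 := hP p (not_lt.1 h)
      have : ((n.factorization p : ℝ) + 1) ≤ 2 ^ (n.factorization p) := by
        have := Nat.lt_two_pow_self (n := n.factorization p)
        exact_mod_cast this
      rw [one_mul]
      exact this.trans (by gcongr)
  have e1 : (n : ℝ) ^ ε = ∏ p ∈ n.primeFactors, ((p : ℝ) ^ ε) ^ (n.factorization p) := by
    conv_lhs => rw [← Nat.prod_factorization_pow_eq_self hn]
    rw [Finsupp.prod, Nat.support_factorization]
    push_cast
    rw [← Real.finsetProd_rpow]
    · refine Finset.prod_congr rfl fun p _ => ?_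
      rw [← Real.rpow_natCast, ← Real.rpow_natCast, ← Real.rpow_mul (by positivity),
        ← Real.rpow_mul (by positivity), mul_comm]
    · intros; positivity
  rw [Nat.card_divisors hn, e1]
  push_cast
  calc _ ≤ ∏ p ∈ n.primeFactors, (if p < P then A else 1) * ((p : ℝ) ^ ε) ^ (n.factorization p) :=
        Finset.prod_le_prod (fun _ _ => by positivity) key
    _ = (∏ p ∈ n.primeFactors, (if p < P then A else 1)) *
        ∏ p ∈ n.primeFactors, ((p : ℝ) ^ ε) ^ (n.factorization p) := Finset.prod_mul_distrib
    _ ≤ _ := by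
      refine mul_le_mul_of_nonneg_right ?_ (Finset.prod_nonneg fun _ _ => by positivity)
      rw [Finset.prod_ite, Finset.prod_const, Finset.prod_const_one, mul_one]
      refine pow_le_pow_right₀ hA1 ?_
      calc _ ≤ (Finset.range P).card := Finset.card_le_card (by intro x; simp)
        _ = P := Finset.card_range P

open GaussianInt in
theorem gauss_div (a B : ℕ)
    (h : ∀ s : Finset GaussianInt, (∀ z ∈ s, z.norm = a) → s.card ≤ B)
    (c : GaussianInt) (hc : c ≠ 0) (s : Finset GaussianInt)
    (hs : ∀ z ∈ s, ∃ w : GaussianInt, w.norm = a ∧ z = c * w) : s.card ≤ B := by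
  have hinj : Set.InjOn (fun z : GaussianInt => z / c) s := by
    intro x hx y hy hxy
    obtain ⟨w, -, rfl⟩ := hs x hx
    obtain ⟨v, -, rfl⟩ := hs y hy
    simp only [mul_div_cancel_left₀ _ hc] at hxy
    rw [hxy]
  rw [← Finset.card_image_of_injOn hinj]
  apply h
  intro z hz
  obtain ⟨y, hy, rfl⟩ := Finset.mem_image.1 hz
  obtain ⟨w, hw, rfl⟩ := hs y hy
  simpa only [mul_div_cancel_left₀ _ hc] using hw

theorem gauss_inert (p : ℕ) (hp : p.Prime) (hpi : Prime (p : GaussianInt)) (a B : ℕ)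
    (hpa : ¬ p ∣ a)
    (h : ∀ s : Finset GaussianInt, (∀ z ∈ s, z.norm = a) → s.card ≤ B) (n : ℕ) :
    ∀ s : Finset GaussianInt, (∀ z ∈ s, z.norm = (p ^ n * a : ℕ)) → s.card ≤ B := by
  induction n using Nat.strong_induction_on with
  | _ n ih =>
    match n with
    | 0 => simpa using h
    | n + 1 =>
      intro s hs
      have hpz : ∀ z ∈ s, ∃ w : GaussianInt, z = p * w ∧ (p : ℤ) * w.norm = p ^ n * a := by
        intro z hz
        have h1 := hs z hz
        have h2 : (p : GaussianInt) ∣ z * star z := by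
          rw [← Zsqrtd.norm_eq_mul_conj, h1]
          exact ⟨p ^ n * a, by push_cast; ring⟩
        have h3 : (p : GaussianInt) ∣ z := by
          rcases hpi.dvd_or_dvd h2 with h | ⟨w, hw⟩
          · exact h
          · refine ⟨star w, ?_⟩
            rw [← star_star z, hw]; simp
        obtain ⟨w, rfl⟩ := h3
        refine ⟨w, rfl, ?_⟩
        rw [Zsqrtd.norm_mul, Zsqrtd.norm_natCast] at h1
        have : (p : ℤ) ≠ 0 := by exact_mod_cast hp.ne_zero
        apply mul_left_cancel₀ this
        push_cast at h1
        rw [← mul_assoc, h1]; ring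
      match n with
      | 0 =>
        have : s = ∅ := by
          apply Finset.eq_empty_of_forall_notMem
          intro z hz
          obtain ⟨w, -, hw⟩ := hpz z hz
          apply hpa
          have : (p : ℤ) ∣ a := ⟨w.norm, by rw [hw]; simp⟩
          exact_mod_cast this
        simp [this]
      | n + 1 =>
        refine gauss_div _ B (ih n (by omega)) p (by exact_mod_cast hp.ne_zero) s fun z hz => ?_
        obtain ⟨w, hw, hw2⟩ := hpz z hz
        refine ⟨w, ?_, hw⟩
        have : (p : ℤ) ≠ 0 := by exact_mod_cast hp.ne_zero
        apply mul_left_cancel₀ this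
        rw [hw2]; push_cast; ring

theorem gauss_split (p : ℕ) (hp : p.Prime) (q : GaussianInt) (hq : q.norm = p) (a B : ℕ)
    (h : ∀ s : Finset GaussianInt, (∀ z ∈ s, z.norm = a) → s.card ≤ B) (n : ℕ)
    (s : Finset GaussianInt) (hs : ∀ z ∈ s, z.norm = (p ^ n * a : ℕ)) :
    s.card ≤ (n + 1) * B := by
  classical
  have hp0 : (p : ℤ) ≠ 0 := by exact_mod_cast hp.ne_zero
  have hqp : Prime q := by
    rw [← irreducible_iff_prime]
    refine ⟨?_, ?_⟩
    · rw [← Zsqrtd.norm_eq_one_iff, hq]; simpa using hp.ne_one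
    · intro x y hxy
      rw [← Zsqrtd.norm_eq_one_iff, ← Zsqrtd.norm_eq_one_iff]
      have : x.norm.natAbs * y.norm.natAbs = p := by
        rw [← Int.natAbs_mul, ← Zsqrtd.norm_mul, ← hxy, hq]; simp
      rcases (Nat.dvd_prime hp).1 (Dvd.intro _ this) with h | h
      · exact Or.inl h
      · right
        rw [h] at this
        exact Nat.eq_of_mul_eq_mul_left hp.pos (by simpa using this)
  have hq' : (star q).norm = p := by rw [Zsqrtd.norm_conj, hq]
  have hq0 : q ≠ 0 := hqp.ne_zero
  have hdec : ∀ n : ℕ, ∀ z : GaussianInt, z.norm = (p ^ n * a : ℕ) →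
      ∃ j ∈ Finset.range (n + 1), ∃ w : GaussianInt, w.norm = a ∧
        z = (q ^ j * star q ^ (n - j)) * w := by
    intro n
    induction n with
    | zero => intro z hz; exact ⟨0, by simp, z, by simpa using hz, by simp⟩
    | succ n ih =>
      intro z hz
      have h2 : q ∣ z * star z := by
        rw [← Zsqrtd.norm_eq_mul_conj, hz]
        have : ((q.norm : ℤ) : GaussianInt) = q * star q := Zsqrtd.norm_eq_mul_conj q
        rw [hq] at this
        refine ⟨star q * (p ^ n * a), ?_⟩
        rw [← mul_assoc, ← this]; push_cast; ring
      rcases hqp.dvd_or_dvd h2 with ⟨w, hw⟩ | ⟨w, hw⟩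
      · obtain ⟨j, hj, v, hv, hv2⟩ := ih w (by
          apply mul_left_cancel₀ hp0
          rw [hw, Zsqrtd.norm_mul, hq] at hz
          rw [hz]; push_cast; ring)
        refine ⟨j + 1, by simp at hj ⊢; omega, v, hv, ?_⟩
        rw [hw, hv2, show n + 1 - (j + 1) = n - j by omega]; ring
      · have hw' : z = star q * star w := by
          rw [← star_star z, hw]; simp
        obtain ⟨j, hj, v, hv, hv2⟩ := ih (star w) (by
          apply mul_left_cancel₀ hp0
          rw [hw', Zsqrtd.norm_mul, hq'] at hz
          rw [hz]; push_cast; ring)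
        have : j ≤ n := by simp at hj; omega
        refine ⟨j, by simp at hj ⊢; omega, v, hv, ?_⟩
        rw [hw', hv2, show n + 1 - j = n - j + 1 by omega]; ring
  have hsub : s ⊆ (Finset.range (n + 1)).biUnion (fun j => s.filter (fun z =>
      ∃ w : GaussianInt, w.norm = a ∧ z = (q ^ j * star q ^ (n - j)) * w)) := by
    intro z hz
    obtain ⟨j, hj, hw⟩ := hdec n z (hs z hz)
    rw [Finset.mem_biUnion]
    exact ⟨j, hj, Finset.mem_filter.2 ⟨hz, hw⟩⟩
  refine (Finset.card_le_card hsub).trans ?_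
  refine (Finset.card_biUnion_le_card_mul _ _ B fun j _ => ?_).trans (by simp)
  refine gauss_div a B h (q ^ j * star q ^ (n - j)) ?_ _ fun z hz => (Finset.mem_filter.1 hz).2
  exact mul_ne_zero (pow_ne_zero _ hq0) (pow_ne_zero _ (star_ne_zero.2 hq0))

theorem gauss_count (K : ℕ) : K ≠ 0 → ∀ s : Finset GaussianInt, (∀ z ∈ s, z.norm = K) →
    s.card ≤ 9 * K.divisors.card := by
  induction K using Nat.recOnPrimePow with
  | zero => simp
  | one =>
    intro _ s hs
    have : s ⊆ ((Finset.Icc (-1 : ℤ) 1) ×ˢ (Finset.Icc (-1 : ℤ) 1)).image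
        (fun t => (⟨t.1, t.2⟩ : GaussianInt)) := by
      intro z hz
      have := hs z hz
      rw [Zsqrtd.norm_def] at this
      simp only [Finset.mem_image, Finset.mem_product, Finset.mem_Icc, Prod.exists]
      refine ⟨z.re, z.im, ⟨⟨?_, ?_⟩, ?_, ?_⟩, rfl⟩ <;> push_cast at this <;>
        nlinarith [mul_self_nonneg z.re, mul_self_nonneg z.im]
    refine (Finset.card_le_card this).trans (Finset.card_image_le.trans ?_)
    simp
  | prime_pow_mul a p n hp hpa hn ih =>
    intro h0 s hs
    have ha0 : a ≠ 0 := by rintro rfl; simp at hpa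
    have hd : (p ^ n * a).divisors.card = (n + 1) * a.divisors.card := by
      rw [Nat.Coprime.card_divisors_mul, Nat.divisors_prime_pow hp]
      · simp
      · exact Nat.Coprime.pow_left _ ((Nat.Prime.coprime_iff_not_dvd hp).2 hpa)
    rw [hd]
    have : Fact p.Prime := ⟨hp⟩
    by_cases hpi : Irreducible (p : GaussianInt)
    · refine (gauss_inert p hp (irreducible_iff_prime.1 hpi) a _ hpa (ih ha0) n s hs).trans ?_
      nlinarith [Nat.zero_le (n * a.divisors.card)]
    · obtain ⟨x, y, hxy⟩ := GaussianInt.sq_add_sq_of_nat_prime_of_not_irreducible p hpi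
      refine (gauss_split p hp ⟨x, y⟩ ?_ a _ (ih ha0) n s hs).trans (le_of_eq (by ring))
      rw [Zsqrtd.norm_def, ← hxy]; push_cast; ring

theorem hyper_three (K x₁ y₁ x₂ y₂ x₃ y₃ X Y : ℤ) (hK : K ≠ 0)
    (h1 : x₁ * y₁ = K) (h2 : x₂ * y₂ = K) (h3 : x₃ * y₃ = K)
    (n12 : x₁ ≠ x₂) (n13 : x₁ ≠ x₃) (n23 : x₂ ≠ x₃)
    (a12 : |x₁ - x₂| ≤ X) (a13 : |x₁ - x₃| ≤ X) (a23 : |x₂ - x₃| ≤ X)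
    (b12 : |y₁ - y₂| ≤ Y) (b13 : |y₁ - y₃| ≤ Y) (b23 : |y₂ - y₃| ≤ Y) :
    |K| ≤ (X * Y) ^ 3 := by
  set D := (x₂ - x₁) * (y₃ - y₁) - (x₃ - x₁) * (y₂ - y₁) with hD
  have hx : D * (x₁ * x₂ * x₃) = -K * ((x₁ - x₂) * (x₁ - x₃) * (x₂ - x₃)) := by
    have e1 : D * (x₁ * x₂ * x₃) = (x₂ - x₁) * x₂ * (x₁ * (x₃ * y₃) - x₃ * (x₁ * y₁))
      - (x₃ - x₁) * x₃ * (x₁ * (x₂ * y₂) - x₂ * (x₁ * y₁)) := by rw [hD]; ring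
    rw [e1, h1, h2, h3]; ring
  have hy : D * (y₁ * y₂ * y₃) = K * ((y₁ - y₂) * (y₁ - y₃) * (y₂ - y₃)) := by
    have e1 : D * (y₁ * y₂ * y₃) = (y₃ - y₁) * y₃ * (y₁ * (x₂ * y₂) - y₂ * (x₁ * y₁))
      - (y₂ - y₁) * y₂ * (y₁ * (x₃ * y₃) - y₃ * (x₁ * y₁)) := by rw [hD]; ring
    rw [e1, h1, h2, h3]; ring
  have hxy : D ^ 2 * K = - ((x₁ - x₂) * (x₁ - x₃) * (x₂ - x₃)) *
      ((y₁ - y₂) * (y₁ - y₃) * (y₂ - y₃)) := by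
    apply mul_left_cancel₀ (pow_ne_zero 2 hK)
    have e1 : K ^ 2 * (D ^ 2 * K) = (D * (x₁ * x₂ * x₃)) * (D * (y₁ * y₂ * y₃)) := by
      have : (D * (x₁ * x₂ * x₃)) * (D * (y₁ * y₂ * y₃)) =
        D ^ 2 * ((x₁ * y₁) * (x₂ * y₂) * (x₃ * y₃)) := by ring
      rw [this, h1, h2, h3]; ring
    rw [e1, hx, hy]; ring
  have hD0 : D ≠ 0 := by
    intro h
    rw [h, zero_mul] at hx
    have := mul_ne_zero (neg_ne_zero.2 hK) (mul_ne_zero (mul_ne_zero (sub_ne_zero.2 n12) (sub_ne_zero.2 n13))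
      (sub_ne_zero.2 n23))
    exact this hx.symm
  have hD1 : 1 ≤ D ^ 2 := by have := sq_pos_of_ne_zero hD0; omega
  have hX : 0 ≤ X := (abs_nonneg _).trans a12
  have hY : 0 ≤ Y := (abs_nonneg _).trans b12
  calc |K| ≤ D ^ 2 * |K| := le_mul_of_one_le_left (abs_nonneg _) hD1
    _ = |D ^ 2 * K| := by rw [abs_mul, abs_of_nonneg (sq_nonneg D)]
    _ = (|x₁ - x₂| * |x₁ - x₃| * |x₂ - x₃|) * (|y₁ - y₂| * |y₁ - y₃| * |y₂ - y₃|) := by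
      rw [hxy, abs_mul, abs_neg]; simp only [abs_mul]
    _ ≤ (X * X * X) * (Y * Y * Y) := by gcongr
    _ = _ := by ring

theorem abs_sub_le_two {a b c L : ℤ} (h1 : |a - c| ≤ L) (h2 : |b - c| ≤ L) : |a - b| ≤ 2 * L := by
  rw [abs_le] at *; constructor <;> linarith [h1.1, h1.2, h2.1, h2.2]

theorem hyper_count (ε : ℝ) (hε : 0 < ε) :
    ∃ C : ℝ, 1 ≤ C ∧ ∀ L M : ℕ, 1 ≤ L → 1 ≤ M → ∀ K c d : ℤ, K ≠ 0 → ∀ s : Finset (ℤ × ℤ),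
      (∀ z ∈ s, z.1 * z.2 = K ∧ |z.1 - c| ≤ L ∧ |z.2 - d| ≤ M) →
      (s.card : ℝ) ≤ C * ((L : ℝ) * M) ^ ε := by
  obtain ⟨C, hC1, hC⟩ := divisor_bound (ε / 3) (by positivity)
  have h64 : (1 : ℝ) ≤ (64 : ℝ) ^ (ε / 3) := Real.one_le_rpow (by norm_num) (by positivity)
  refine ⟨2 * C * (64 : ℝ) ^ (ε / 3), by nlinarith, fun L M hL hM K c d hK s hs => ?_⟩
  have hL' : (1 : ℝ) ≤ L := by exact_mod_cast hL
  have hM' : (1 : ℝ) ≤ M := by exact_mod_cast hM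
  have hLM : (1 : ℝ) ≤ (L : ℝ) * M := one_le_mul_of_one_le_of_one_le hL' hM'
  have hLMe : (1 : ℝ) ≤ ((L : ℝ) * M) ^ ε := Real.one_le_rpow hLM hε.le
  by_cases h2 : 2 < s.card
  · have hinj : ∀ z ∈ s, ∀ w ∈ s, z ≠ w → z.1 ≠ w.1 := by
      intro z hz w hw hne heq
      apply hne
      have h1 := (hs z hz).1
      have h2 := (hs w hw).1
      refine Prod.ext heq ?_
      have hz0 : z.1 ≠ 0 := by rintro h; rw [h, zero_mul] at h1; exact hK h1.symm
      apply mul_left_cancel₀ hz0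
      rw [h1, heq, h2]
    obtain ⟨x, hx, y, hy, z, hz, hxy, hxz, hyz⟩ := Finset.two_lt_card.1 h2
    have hK3 := hyper_three K x.1 x.2 y.1 y.2 z.1 z.2 (2 * L) (2 * M) hK (hs x hx).1 (hs y hy).1
      (hs z hz).1 (hinj x hx y hy hxy) (hinj x hx z hz hxz) (hinj y hy z hz hyz)
      (abs_sub_le_two (hs x hx).2.1 (hs y hy).2.1) (abs_sub_le_two (hs x hx).2.1 (hs z hz).2.1)
      (abs_sub_le_two (hs y hy).2.1 (hs z hz).2.1)
      (abs_sub_le_two (hs x hx).2.2 (hs y hy).2.2) (abs_sub_le_two (hs x hx).2.2 (hs z hz).2.2)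
      (abs_sub_le_two (hs y hy).2.2 (hs z hz).2.2)
    have hKn : (K.natAbs : ℝ) ≤ 64 * ((L : ℝ) * M) ^ 3 := by
      rw [Nat.cast_natAbs]
      have : ((|K| : ℤ) : ℝ) ≤ (((2 * L * (2 * M)) ^ 3 : ℤ) : ℝ) := by exact_mod_cast hK3
      refine this.trans (le_of_eq ?_)
      push_cast; ring
    have hcard : s.card ≤ 2 * K.natAbs.divisors.card := by
      have h1 : s.card = (s.image Prod.fst).card := by
        rw [Finset.card_image_of_injOn]
        intro z hz w hw h
        by_contra hne
        exact hinj z hz w hw hne h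
      rw [h1]
      have hsub : s.image Prod.fst ⊆ (K.natAbs.divisors.image (fun n : ℕ => (n : ℤ))) ∪
          (K.natAbs.divisors.image (fun n : ℕ => -(n : ℤ))) := by
        intro t ht
        obtain ⟨z, hz, rfl⟩ := Finset.mem_image.1 ht
        have hd : z.1.natAbs ∈ K.natAbs.divisors := by
          rw [Nat.mem_divisors]
          exact ⟨Int.natAbs_dvd_natAbs.2 ⟨z.2, (hs z hz).1.symm⟩, Int.natAbs_ne_zero.2 hK⟩
        rw [Finset.mem_union, Finset.mem_image, Finset.mem_image]
        rcases Int.natAbs_eq z.1 with h | h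
        · exact Or.inl ⟨_, hd, h.symm⟩
        · exact Or.inr ⟨_, hd, h.symm⟩
      refine (Finset.card_le_card hsub).trans ((Finset.card_union_le _ _).trans ?_)
      have := Finset.card_image_le (s := K.natAbs.divisors) (f := fun n : ℕ => (n : ℤ))
      have := Finset.card_image_le (s := K.natAbs.divisors) (f := fun n : ℕ => -(n : ℤ))
      omega
    calc (s.card : ℝ) ≤ 2 * (K.natAbs.divisors.card : ℝ) := by exact_mod_cast hcard
      _ ≤ 2 * (C * (K.natAbs : ℝ) ^ (ε / 3)) := by
        gcongr; exact hC _ (Int.natAbs_ne_zero.2 hK)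
      _ ≤ 2 * (C * (64 * ((L : ℝ) * M) ^ 3) ^ (ε / 3)) := by gcongr
      _ = _ := by
        rw [Real.mul_rpow (by norm_num) (by positivity), ← Real.rpow_natCast,
          ← Real.rpow_mul (by positivity)]
        norm_num
        rw [mul_div_cancel₀ _ (by norm_num)]
        ring
  · have : (s.card : ℝ) ≤ 2 := by exact_mod_cast not_lt.1 h2
    refine this.trans ?_
    have h3 : 1 ≤ C * (64 : ℝ) ^ (ε / 3) * ((L : ℝ) * M) ^ ε :=
      one_le_mul_of_one_le_of_one_le (one_le_mul_of_one_le_of_one_le hC1 h64) hLMe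
    linarith

theorem circ_three (K x₁ y₁ x₂ y₂ x₃ y₃ X : ℤ)
    (h1 : x₁ ^ 2 + y₁ ^ 2 = K) (h2 : x₂ ^ 2 + y₂ ^ 2 = K) (h3 : x₃ ^ 2 + y₃ ^ 2 = K)
    (n12 : (x₁, y₁) ≠ (x₂, y₂)) (n13 : (x₁, y₁) ≠ (x₃, y₃)) (n23 : (x₂, y₂) ≠ (x₃, y₃))
    (a12 : |x₁ - x₂| ≤ X) (a13 : |x₁ - x₃| ≤ X) (a23 : |x₂ - x₃| ≤ X)
    (b12 : |y₁ - y₂| ≤ X) (b13 : |y₁ - y₃| ≤ X) (b23 : |y₂ - y₃| ≤ X) :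
    K ≤ 2 * X ^ 6 := by
  have hpos : ∀ x y x' y' : ℤ, (x, y) ≠ (x', y') → 0 < (x - x') ^ 2 + (y - y') ^ 2 := by
    intro x y x' y' hne
    by_contra hcon
    apply hne
    have e1 : x - x' = 0 := by nlinarith [sq_nonneg (x - x'), sq_nonneg (y - y')]
    have e2 : y - y' = 0 := by nlinarith [sq_nonneg (x - x'), sq_nonneg (y - y')]
    rw [sub_eq_zero.1 e1, sub_eq_zero.1 e2]
  have hX : 0 ≤ X := (abs_nonneg _).trans a12
  have hub : ∀ x y x' y' : ℤ, |x - x'| ≤ X → |y - y'| ≤ X →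
      (x - x') ^ 2 + (y - y') ^ 2 ≤ 2 * X ^ 2 := by
    intro x y x' y' h h'
    have := sq_le_sq' (abs_le.1 h).1 (abs_le.1 h).2
    have := sq_le_sq' (abs_le.1 h').1 (abs_le.1 h').2
    linarith
  obtain ⟨A, hA⟩ : ∃ t : ℤ, t = (x₁ - x₂) ^ 2 + (y₁ - y₂) ^ 2 := ⟨_, rfl⟩
  obtain ⟨B, hB⟩ : ∃ t : ℤ, t = (x₁ - x₃) ^ 2 + (y₁ - y₃) ^ 2 := ⟨_, rfl⟩
  obtain ⟨E, hE⟩ : ∃ t : ℤ, t = (x₂ - x₃) ^ 2 + (y₂ - y₃) ^ 2 := ⟨_, rfl⟩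
  obtain ⟨D, hD⟩ : ∃ t : ℤ, t = (x₂ - x₁) * (y₃ - y₁) - (x₃ - x₁) * (y₂ - y₁) := ⟨_, rfl⟩
  have hid : 4 * K * D ^ 2 = A * B * E := by
    have e1 : 2 * x₁ * D = -A * (y₃ - y₁) + B * (y₂ - y₁) := by
      rw [hA, hB, hD]
      linear_combination (y₃ - y₁) * (h2 - h1) - (y₂ - y₁) * (h3 - h1)
    have e2 : 2 * y₁ * D = A * (x₃ - x₁) - B * (x₂ - x₁) := by
      rw [hA, hB, hD]
      linear_combination -(x₃ - x₁) * (h2 - h1) + (x₂ - x₁) * (h3 - h1)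
    have e3 : 4 * K * D ^ 2 = (2 * x₁ * D) ^ 2 + (2 * y₁ * D) ^ 2 := by rw [← h1]; ring
    rw [e3, e1, e2, hE]
    have : (-A * (y₃ - y₁) + B * (y₂ - y₁)) ^ 2 + (A * (x₃ - x₁) - B * (x₂ - x₁)) ^ 2
      = A ^ 2 * B + B ^ 2 * A - A * B * (A + B - E) := by
      rw [hA, hB, hE]; ring
    rw [this, hE]; ring
  have pA : 0 < A := hA ▸ hpos _ _ _ _ n12
  have pB : 0 < B := hB ▸ hpos _ _ _ _ n13
  have pE : 0 < E := hE ▸ hpos _ _ _ _ n23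
  have hD0 : D ≠ 0 := by
    intro h; rw [h] at hid
    have : 0 < A * B * E := by positivity
    rw [← hid] at this; simp at this
  have hD1 : 1 ≤ D ^ 2 := by have := sq_pos_of_ne_zero hD0; omega
  have hK0 : 0 ≤ K := by rw [← h1]; positivity
  have : 4 * K ≤ (2 * X ^ 2) * (2 * X ^ 2) * (2 * X ^ 2) :=
    calc 4 * K ≤ 4 * K * D ^ 2 := le_mul_of_one_le_right (by positivity) hD1
      _ = A * B * E := hid
      _ ≤ _ := by
        have := hub _ _ _ _ a12 b12
        rw [← hA] at this
        have := hub _ _ _ _ a13 b13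
        rw [← hB] at this
        have := hub _ _ _ _ a23 b23
        rw [← hE] at this
        gcongr
  have e : (2 * X ^ 2) * (2 * X ^ 2) * (2 * X ^ 2) = 8 * X ^ 6 := by ring
  linarith

theorem circ_count (ε : ℝ) (hε : 0 < ε) :
    ∃ C : ℝ, 1 ≤ C ∧ ∀ L : ℕ, 1 ≤ L → ∀ K c d : ℤ, ∀ s : Finset (ℤ × ℤ),
      (∀ z ∈ s, z.1 ^ 2 + z.2 ^ 2 = K ∧ |z.1 - c| ≤ L ∧ |z.2 - d| ≤ L) →
      (s.card : ℝ) ≤ C * (L : ℝ) ^ ε := by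
  obtain ⟨C, hC1, hC⟩ := divisor_bound (ε / 6) (by positivity)
  have h64 : (1 : ℝ) ≤ (128 : ℝ) ^ (ε / 6) := Real.one_le_rpow (by norm_num) (by positivity)
  refine ⟨9 * C * (128 : ℝ) ^ (ε / 6), by nlinarith, fun L hL K c d s hs => ?_⟩
  have hL' : (1 : ℝ) ≤ L := by exact_mod_cast hL
  have hLMe : (1 : ℝ) ≤ (L : ℝ) ^ ε := Real.one_le_rpow hL' hε.le
  by_cases h2 : 2 < s.card
  · obtain ⟨x, hx, y, hy, z, hz, hxy, hxz, hyz⟩ := Finset.two_lt_card.1 h2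
    have hK3 := circ_three K x.1 x.2 y.1 y.2 z.1 z.2 (2 * L) (hs x hx).1 (hs y hy).1
      (hs z hz).1 hxy hxz hyz
      (abs_sub_le_two (hs x hx).2.1 (hs y hy).2.1) (abs_sub_le_two (hs x hx).2.1 (hs z hz).2.1)
      (abs_sub_le_two (hs y hy).2.1 (hs z hz).2.1)
      (abs_sub_le_two (hs x hx).2.2 (hs y hy).2.2) (abs_sub_le_two (hs x hx).2.2 (hs z hz).2.2)
      (abs_sub_le_two (hs y hy).2.2 (hs z hz).2.2)
    have hK0 : 0 ≤ K := by rw [← (hs x hx).1]; positivity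
    lift K to ℕ using hK0
    have hKne : K ≠ 0 := by
      rintro rfl
      have h0 : ∀ w ∈ s, w = (0, 0) := by
        intro w hw
        have := (hs w hw).1
        push_cast at this
        refine Prod.ext ?_ ?_
        · show w.1 = 0
          nlinarith [sq_nonneg w.1, sq_nonneg w.2]
        · show w.2 = 0
          nlinarith [sq_nonneg w.1, sq_nonneg w.2]
      exact hxy ((h0 x hx).trans (h0 y hy).symm)
    have hKn : (K : ℝ) ≤ 128 * (L : ℝ) ^ 6 := by
      have : ((K : ℤ) : ℝ) ≤ ((2 * (2 * L) ^ 6 : ℤ) : ℝ) := by exact_mod_cast hK3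
      refine le_trans (by exact_mod_cast le_refl _) (this.trans (le_of_eq ?_))
      push_cast; ring
    have hcard : s.card ≤ 9 * K.divisors.card := by
      have hinj : Function.Injective (fun z : ℤ × ℤ => (⟨z.1, z.2⟩ : GaussianInt)) := by
        intro a b hab
        have h1 := congrArg Zsqrtd.re hab
        have h2 := congrArg Zsqrtd.im hab
        exact Prod.ext h1 h2
      rw [← Finset.card_image_of_injective s hinj]
      refine gauss_count K hKne _ fun w hw => ?_
      obtain ⟨z, hz, rfl⟩ := Finset.mem_image.1 hw
      rw [Zsqrtd.norm_def, ← (hs z hz).1]; ring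
    calc (s.card : ℝ) ≤ 9 * (K.divisors.card : ℝ) := by exact_mod_cast hcard
      _ ≤ 9 * (C * (K : ℝ) ^ (ε / 6)) := by
        gcongr; exact hC _ hKne
      _ ≤ 9 * (C * (128 * (L : ℝ) ^ 6) ^ (ε / 6)) := by gcongr
      _ = _ := by
        rw [Real.mul_rpow (by norm_num) (by positivity), ← Real.rpow_natCast,
          ← Real.rpow_mul (by positivity)]
        norm_num
        rw [mul_div_cancel₀ _ (by norm_num)]
        ring
  · have : (s.card : ℝ) ≤ 2 := by exact_mod_cast not_lt.1 h2
    refine this.trans ?_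
    have h3 : 1 ≤ C * (128 : ℝ) ^ (ε / 6) * (L : ℝ) ^ ε :=
      one_le_mul_of_one_le_of_one_le (one_le_mul_of_one_le_of_one_le hC1 h64) hLMe
    linarith

theorem fiber_bound {α β γ : Type*} [DecidableEq β] [DecidableEq γ]
    (s : Finset α) (t : Finset β) (f : α → β) (g : α → γ) (H : ℝ)
    (hf : ∀ a ∈ s, f a ∈ t)
    (hinj : ∀ a ∈ s, ∀ b ∈ s, f a = f b → g a = g b → a = b)
    (hH : ∀ b ∈ t, ∀ r : Finset γ, (∀ c ∈ r, ∃ a ∈ s, f a = b ∧ g a = c) → (r.card : ℝ) ≤ H) :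
    (s.card : ℝ) ≤ t.card * H := by
  rw [Finset.card_eq_sum_card_fiberwise (f := f) (t := t) (fun a ha => hf a ha)]
  push_cast
  rw [← nsmul_eq_mul]
  refine Finset.sum_le_card_nsmul _ _ _ fun b hb => ?_
  have hi : Set.InjOn g (s.filter (fun a => f a = b) : Finset α) := by
    intro x hx y hy hxy
    have hx := Finset.mem_filter.1 hx
    have hy := Finset.mem_filter.1 hy
    exact hinj x hx.1 y hy.1 (hx.2.trans hy.2.symm) hxy
  rw [← Finset.card_image_of_injOn hi]
  refine hH b hb _ fun c hc => ?_
  obtain ⟨a, ha, rfl⟩ := Finset.mem_image.1 hc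
  have ha := Finset.mem_filter.1 ha
  exact ⟨a, ha.1, ha.2, rfl⟩

theorem box_card (c : ℤ) (L : ℕ) (hL : 1 ≤ L) :
    ((Finset.Icc (c - L) (c + L)).card : ℝ) ≤ 3 * L := by
  rw [Int.card_Icc]
  have : (c + L + 1 - (c - L)).toNat ≤ 3 * L := by omega
  exact_mod_cast this

theorem mem_box {c x : ℤ} {L : ℕ} (h : |x - c| ≤ L) : x ∈ Finset.Icc (c - (L : ℤ)) (c + L) := by
  rw [Finset.mem_Icc]; rw [abs_le] at h; constructor <;> linarith [h.1, h.2]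

theorem box2_card (c d : ℤ) (L M : ℕ) (hL : 1 ≤ L) (hM : 1 ≤ M) :
    (((Finset.Icc (c - L) (c + L)) ×ˢ (Finset.Icc (d - M) (d + M))).card : ℝ) ≤ 9 * (L * M) := by
  rw [Finset.card_product]
  push_cast
  have h1 := box_card c L hL
  have h2 := box_card d M hM
  calc _ ≤ (3 * (L : ℝ)) * (3 * M) := by gcongr
    _ = _ := by ring

theorem degen_count (H : ℝ) (hH1 : 1 ≤ H) (L M : ℕ) (hL : 1 ≤ L) (hM : 1 ≤ M) (c d : ℤ × ℤ)
    (hH : ∀ K : ℤ, K ≠ 0 → ∀ s : Finset (ℤ × ℤ),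
      (∀ z ∈ s, z.1 * z.2 = K ∧ |z.1 - c.1| ≤ L ∧ |z.2 - d.1| ≤ M) → (s.card : ℝ) ≤ H)
    (m : ℤ) (s : Finset ((ℤ × ℤ) × (ℤ × ℤ)))
    (hs : ∀ p ∈ s, |p.1.1 - c.1| ≤ L ∧ |p.1.2 - c.2| ≤ L ∧ |p.2.1 - d.1| ≤ M ∧
      p.2 ≠ 0 ∧ p.2.2 = 0 ∧ p.1.1 * p.2.1 = m) :
    (s.card : ℝ) ≤ 9 * (L * M) * H := by
  have hL' : (1 : ℝ) ≤ L := by exact_mod_cast hL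
  have hM' : (1 : ℝ) ≤ M := by exact_mod_cast hM
  by_cases hm : m = 0
  · subst hm
    have h1 : ∀ p ∈ s, p.1.1 = 0 := by
      intro p hp
      obtain ⟨-, -, -, h4, h5, h6⟩ := hs p hp
      rcases mul_eq_zero.1 h6 with h | h
      · exact h
      · exact absurd (Prod.ext h h5) h4
    refine (fiber_bound s
      ((Finset.Icc (c.2 - L) (c.2 + L)) ×ˢ (Finset.Icc (d.1 - M) (d.1 + M)))
      (fun p => (p.1.2, p.2.1)) (fun _ => ()) H ?_ ?_ ?_).trans ?_
    · intro p hp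
      obtain ⟨-, h2, h3, -⟩ := hs p hp
      exact Finset.mem_product.2 ⟨mem_box h2, mem_box h3⟩
    · intro a ha b hb hab _
      have e1 := congrArg Prod.fst hab
      have e2 := congrArg Prod.snd hab
      refine Prod.ext (Prod.ext ?_ e1) (Prod.ext e2 ?_)
      · rw [h1 a ha, h1 b hb]
      · rw [(hs a ha).2.2.2.2.1, (hs b hb).2.2.2.2.1]
    · intro b _ r _
      have : r.card ≤ 1 := by simpa using Finset.card_le_univ r
      exact le_trans (by exact_mod_cast this) hH1
    · have := box2_card c.2 d.1 L M hL hM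
      gcongr
  · refine (fiber_bound s (Finset.Icc (c.2 - L) (c.2 + L)) (fun p => p.1.2)
      (fun p => (p.1.1, p.2.1)) H ?_ ?_ ?_).trans ?_
    · intro p hp
      exact mem_box (hs p hp).2.1
    · intro a ha b hb hab hab2
      have e1 := congrArg Prod.fst hab2
      have e2 := congrArg Prod.snd hab2
      refine Prod.ext (Prod.ext e1 hab) (Prod.ext e2 ?_)
      rw [(hs a ha).2.2.2.2.1, (hs b hb).2.2.2.2.1]
    · intro b _ r hr
      refine hH m hm r fun z hz => ?_
      obtain ⟨a, ha, -, rfl⟩ := hr z hz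
      obtain ⟨h1, h2, h3, h4, h5, h6⟩ := hs a ha
      exact ⟨h6, h1, h3⟩
    · have := box_card c.2 L hL
      have h3 : (3 : ℝ) * L ≤ 9 * (L * M) := by nlinarith
      have := this.trans h3
      gcongr

theorem pair_count (ε : ℝ) (hε : 0 < ε) :
    ∃ C : ℝ, 1 ≤ C ∧ ∀ L M : ℕ, 1 ≤ L → 1 ≤ M → ∀ (m : ℤ) (c d : ℤ × ℤ),
      ∀ s : Finset ((ℤ × ℤ) × (ℤ × ℤ)),
      (∀ p ∈ s, |p.1.1 - c.1| ≤ L ∧ |p.1.2 - c.2| ≤ L ∧ |p.2.1 - d.1| ≤ M ∧ |p.2.2 - d.2| ≤ M ∧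
        p.1 ≠ 0 ∧ p.2 ≠ 0 ∧ p.1.1 * p.2.1 + p.1.2 * p.2.2 = m) →
      (s.card : ℝ) ≤ C * (((L : ℝ) * M) * ((L : ℝ) * M) ^ ε) := by
  obtain ⟨C, hC1, hC⟩ := hyper_count ε hε
  refine ⟨27 * C, by linarith, fun L M hL hM m c d s hs => ?_⟩
  have hL' : (1 : ℝ) ≤ L := by exact_mod_cast hL
  have hM' : (1 : ℝ) ≤ M := by exact_mod_cast hM
  have hLM : (1 : ℝ) ≤ (L : ℝ) * M := one_le_mul_of_one_le_of_one_le hL' hM'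
  have hLMe : (1 : ℝ) ≤ ((L : ℝ) * M) ^ ε := Real.one_le_rpow hLM hε.le
  obtain ⟨H, hHdef⟩ : ∃ H : ℝ, H = C * ((L : ℝ) * M) ^ ε := ⟨_, rfl⟩
  have hH1 : 1 ≤ H := by rw [hHdef]; exact one_le_mul_of_one_le_of_one_le hC1 hLMe
  have hA : ((s.filter (fun p => p.1.1 * p.2.1 ≠ m)).card : ℝ) ≤ 9 * (L * M) * H := by
    refine (fiber_bound _ ((Finset.Icc (c.1 - L) (c.1 + L)) ×ˢ (Finset.Icc (d.1 - M) (d.1 + M)))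
      (fun p => (p.1.1, p.2.1)) (fun p => (p.1.2, p.2.2)) H ?_ ?_ ?_).trans ?_
    · intro p hp
      obtain ⟨h1, h2, h3, -⟩ := hs p (Finset.mem_filter.1 hp).1
      exact Finset.mem_product.2 ⟨mem_box h1, mem_box h3⟩
    · intro a ha b hb hab hab2
      have e1 := congrArg Prod.fst hab
      have e2 := congrArg Prod.snd hab
      have e3 := congrArg Prod.fst hab2
      have e4 := congrArg Prod.snd hab2
      exact Prod.ext (Prod.ext e1 e3) (Prod.ext e2 e4)
    · rintro ⟨b1, b2⟩ _ r hr
      rcases r.eq_empty_or_nonempty with rfl | ⟨z0, hz0⟩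
      · simp; linarith
      have hne : m - b1 * b2 ≠ 0 := by
        obtain ⟨a, ha, hab, -⟩ := hr z0 hz0
        have e1 := congrArg Prod.fst hab
        have e2 := congrArg Prod.snd hab
        have := (Finset.mem_filter.1 ha).2
        simp only at e1 e2
        rw [e1, e2] at this
        exact sub_ne_zero.2 this.symm
      rw [hHdef]
      refine hC L M hL hM (m - b1 * b2) c.2 d.2 hne r fun z hz => ?_
      obtain ⟨a, ha, hab, rfl⟩ := hr z hz
      have e1 := congrArg Prod.fst hab
      have e2 := congrArg Prod.snd hab
      simp only at e1 e2
      obtain ⟨h1, h2, h3, h4, h5, h6, h7⟩ := hs a (Finset.mem_filter.1 ha).1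
      refine ⟨?_, h2, h4⟩
      rw [← h7, ← e1, ← e2]; ring
    · have := box2_card c.1 d.1 L M hL hM
      gcongr
  have hB1 : ((s.filter (fun p => p.1.1 * p.2.1 = m ∧ p.2.2 = 0)).card : ℝ) ≤
      9 * (L * M) * H := by
    refine degen_count H hH1 L M hL hM c d ?_ m _ ?_
    · intro K hK r hr
      rw [hHdef]; exact hC L M hL hM K _ _ hK r hr
    · intro p hp
      obtain ⟨hp, hp1, hp2⟩ := Finset.mem_filter.1 hp
      obtain ⟨h1, h2, h3, h4, h5, h6, h7⟩ := hs p hp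
      exact ⟨h1, h2, h3, h6, hp2, hp1⟩
  have hB2 : ((s.filter (fun p => p.1.1 * p.2.1 = m ∧ p.1.2 = 0)).card : ℝ) ≤
      9 * (L * M) * H := by
    rw [← Finset.card_image_of_injective _ Prod.swap_injective]
    rw [mul_comm (L : ℝ) M]
    refine degen_count H hH1 M L hM hL d c ?_ m _ ?_
    · intro K hK r hr
      rw [hHdef, mul_comm (L : ℝ) M]; exact hC M L hM hL K _ _ hK r hr
    · intro q hq
      obtain ⟨p, hp, rfl⟩ := Finset.mem_image.1 hq
      obtain ⟨hp, hp1, hp2⟩ := Finset.mem_filter.1 hp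
      obtain ⟨h1, h2, h3, h4, h5, h6, h7⟩ := hs p hp
      exact ⟨h3, h4, h1, h5, hp2, by rw [← hp1]; exact mul_comm _ _⟩
  have hsub : s ⊆ s.filter (fun p => p.1.1 * p.2.1 ≠ m) ∪
      (s.filter (fun p => p.1.1 * p.2.1 = m ∧ p.2.2 = 0) ∪
        s.filter (fun p => p.1.1 * p.2.1 = m ∧ p.1.2 = 0)) := by
    intro p hp
    have h7 := (hs p hp).2.2.2.2.2.2
    simp only [Finset.mem_union, Finset.mem_filter]
    by_cases h : p.1.1 * p.2.1 = m
    · have : p.1.2 * p.2.2 = 0 := by linarith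
      rcases mul_eq_zero.1 this with h' | h'
      · exact Or.inr (Or.inr ⟨hp, h, h'⟩)
      · exact Or.inr (Or.inl ⟨hp, h, h'⟩)
    · exact Or.inl ⟨hp, h⟩
  have hcard := (Finset.card_le_card hsub).trans ((Finset.card_union_le _ _).trans
    (Nat.add_le_add_left (Finset.card_union_le _ _) _))
  have hcard' : (s.card : ℝ) ≤ (s.filter (fun p => p.1.1 * p.2.1 ≠ m)).card +
      ((s.filter (fun p => p.1.1 * p.2.1 = m ∧ p.2.2 = 0)).card +
        (s.filter (fun p => p.1.1 * p.2.1 = m ∧ p.1.2 = 0)).card) := by exact_mod_cast hcard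
  calc (s.card : ℝ) ≤ 27 * (L * M) * H := by linarith
    _ = _ := by rw [hHdef]; ring

theorem op_bound {α β : Type*} (S : α → β → Prop) (h : α → β → ℝ)
    (h1 : ∀ n t, S n t → h n t = 1) (h0 : ∀ n t, ¬ S n t → h n t = 0)
    (huniq : ∀ t n n', S n t → S n' t → n = n')
    (hfin : ∀ n, {t | S n t}.Finite) (B : ℝ) (hB : 0 ≤ B)
    (hcard : ∀ n, ∀ T : Finset β, (∀ t ∈ T, S n t) → (T.card : ℝ) ≤ B ^ 2)
    (f : β → ℝ) (hf : Summable (fun t => f t ^ 2)) :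
    Real.sqrt (∑' n, (∑' t, h n t * f t) ^ 2) ≤ B * Real.sqrt (∑' t, f t ^ 2) := by
  classical
  have hnn : 0 ≤ ∑' t, f t ^ 2 := tsum_nonneg fun t => sq_nonneg _
  apply Real.sqrt_le_iff.2
  refine ⟨by positivity, ?_⟩
  rw [mul_pow, Real.sq_sqrt hnn]
  refine Real.tsum_le_of_sum_le (fun n => sq_nonneg _) fun s => ?_
  have hrow : ∀ n, (∑' t, h n t * f t) ^ 2 ≤ B ^ 2 * ∑ t ∈ (hfin n).toFinset, f t ^ 2 := by
    intro n
    have e : ∑' t, h n t * f t = ∑ t ∈ (hfin n).toFinset, f t := by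
      rw [tsum_eq_sum (s := (hfin n).toFinset)]
      · refine Finset.sum_congr rfl fun t ht => ?_
        rw [h1 n t (by simpa using ht), one_mul]
      · intro t ht
        rw [h0 n t (by simpa using ht), zero_mul]
    rw [e]
    refine sq_sum_le_card_mul_sum_sq.trans ?_
    refine mul_le_mul_of_nonneg_right ?_ (Finset.sum_nonneg fun _ _ => sq_nonneg _)
    exact hcard n _ fun t ht => by simpa using ht
  calc _ ≤ ∑ n ∈ s, B ^ 2 * ∑ t ∈ (hfin n).toFinset, f t ^ 2 :=
        Finset.sum_le_sum fun n _ => hrow n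
    _ = B ^ 2 * ∑ t ∈ s.biUnion (fun n => (hfin n).toFinset), f t ^ 2 := by
      rw [← Finset.mul_sum, Finset.sum_biUnion]
      intro n _ n' _ hne
      rw [Function.onFun, Finset.disjoint_left]
      intro t ht ht'
      exact hne (huniq t n n' (by simpa using ht) (by simpa using ht'))
    _ ≤ _ := by
      refine mul_le_mul_of_nonneg_left ?_ (sq_nonneg _)
      exact hf.sum_le_tsum _ fun _ _ => sq_nonneg _

theorem sim_bound {k : ℕ} {x : ℤ × ℤ} (h : simDyadic (2 ^ k) x) :
    |x.1| ≤ ((2 ^ k : ℕ) : ℤ) ∧ |x.2| ≤ ((2 ^ k : ℕ) : ℤ) := by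
  have hz : znorm x ≤ 2 ^ k := by
    rcases h with ⟨h1, h2⟩ | ⟨-, -, h2⟩
    · rw [h1]; exact h2
    · exact h2
  rw [znorm, Real.sqrt_le_iff] at hz
  obtain ⟨h0, hz⟩ := hz
  constructor
  · have : |(x.1 : ℝ)| ≤ 2 ^ k := abs_le_of_sq_le_sq (by nlinarith [sq_nonneg (x.2 : ℝ)]) h0
    exact_mod_cast this
  · have : |(x.2 : ℝ)| ≤ 2 ^ k := abs_le_of_sq_le_sq (by nlinarith [sq_nonneg (x.1 : ℝ)]) h0
    exact_mod_cast this

theorem phi_eq {n n₁ n₂ n₃ : ℤ × ℤ} {m : ℤ} (h : n = n₁ - n₂ + n₃) (hφ : phiFn n n₁ n₂ n₃ = m) :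
    (n - n₁).1 * (n - n₃).1 + (n - n₁).2 * (n - n₃).2 = m / 2 := by
  have h2 : n₂ = n₁ + n₃ - n := by rw [h]; abel
  have : 2 * ((n - n₁).1 * (n - n₃).1 + (n - n₁).2 * (n - n₃).2) = m := by
    rw [← hφ, h2]
    simp only [phiFn, nsq, Prod.fst_sub, Prod.snd_sub, Prod.fst_add, Prod.snd_add]
    ring
  omega

theorem circ_count' (ε : ℝ) (hε : 0 < ε) :
    ∃ C : ℝ, 1 ≤ C ∧ ∀ L : ℕ, 1 ≤ L → ∀ (K : ℤ) (a : ℤ × ℤ), ∀ s : Finset (ℤ × ℤ),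
      (∀ z ∈ s, nsq z + nsq (a - z) = K ∧ |z.1| ≤ L ∧ |z.2| ≤ L) →
      (s.card : ℝ) ≤ C * (L : ℝ) ^ ε := by
  obtain ⟨C, hC1, hC⟩ := circ_count ε hε
  have h2 : (1 : ℝ) ≤ (2 : ℝ) ^ ε := Real.one_le_rpow (by norm_num) hε.le
  refine ⟨C * 2 ^ ε, one_le_mul_of_one_le_of_one_le hC1 h2, fun L hL K a s hs => ?_⟩
  have hinj : Function.Injective (fun z : ℤ × ℤ => (2 * z.1 - a.1, 2 * z.2 - a.2)) := by
    intro x y hxy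
    have e1 := congrArg Prod.fst hxy
    have e2 := congrArg Prod.snd hxy
    simp only at e1 e2
    exact Prod.ext (by omega) (by omega)
  rw [← Finset.card_image_of_injective s hinj]
  refine (hC (2 * L) (by omega) (2 * K - nsq a) (-a.1) (-a.2) _ ?_).trans (le_of_eq ?_)
  · intro w hw
    obtain ⟨z, hz, rfl⟩ := Finset.mem_image.1 hw
    obtain ⟨h1, h2, h3⟩ := hs z hz
    refine ⟨?_, ?_, ?_⟩
    · rw [← h1]; simp only [nsq, Prod.fst_sub, Prod.snd_sub]; ring
    · rw [abs_le] at *; push_cast; constructor <;> linarith [h2.1, h2.2]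
    · rw [abs_le] at *; push_cast; constructor <;> linarith [h3.1, h3.2]
  · push_cast
    rw [Real.mul_rpow (by norm_num) (by positivity)]; ring

theorem row_circ (ε : ℝ) (hε : 0 < ε) :
    ∃ C : ℝ, 1 ≤ C ∧ ∀ (k k₁ k₂ k₃ : ℕ) (m : ℤ) (n : ℤ × ℤ)
      (T : Finset ((ℤ × ℤ) × (ℤ × ℤ) × (ℤ × ℤ))),
      (∀ t ∈ T, SMem (2 ^ k) (2 ^ k₁) (2 ^ k₂) (2 ^ k₃) m n t.1 t.2.1 t.2.2) →
      (T.card : ℝ) ≤ C * (((2 : ℝ) ^ k₂) ^ 2 * ((2 : ℝ) ^ k₁) ^ ε) ∧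
      (T.card : ℝ) ≤ C * (((2 : ℝ) ^ k₂) ^ 2 * ((2 : ℝ) ^ k₃) ^ ε) := by
  obtain ⟨C, hC1, hC⟩ := circ_count' ε hε
  refine ⟨9 * C, by linarith, fun k k₁ k₂ k₃ m n T hT => ?_⟩
  have hf : ∀ a ∈ T, a.2.1 ∈ (Finset.Icc ((0 : ℤ) - (2 ^ k₂ : ℕ)) (0 + (2 ^ k₂ : ℕ))) ×ˢ
      (Finset.Icc ((0 : ℤ) - (2 ^ k₂ : ℕ)) (0 + (2 ^ k₂ : ℕ))) := by
    intro a ha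
    obtain ⟨h1, h2, h3, h4, h5, h6, h7, h8⟩ := hT a ha
    have := sim_bound h7
    exact Finset.mem_product.2 ⟨mem_box (by simpa using this.1), mem_box (by simpa using this.2)⟩
  have hbox := box2_card 0 0 (2 ^ k₂) (2 ^ k₂) Nat.one_le_two_pow Nat.one_le_two_pow
  constructor
  · refine (fiber_bound T _ (fun t => t.2.1) (fun t => t.1) (C * ((2 : ℝ) ^ k₁) ^ ε)
      hf ?_ ?_).trans ?_
    · intro a ha b hb e1 e2
      have ha1 := (hT a ha).1
      have hb1 := (hT b hb).1
      refine Prod.ext e2 (Prod.ext e1 ?_)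
      rw [show a.2.1 = b.2.1 from e1, show a.1 = b.1 from e2] at ha1
      exact add_left_cancel (ha1.symm.trans hb1)
    · intro b _ r hr
      have := hC (2 ^ k₁) Nat.one_le_two_pow (nsq n + nsq b - m) (n + b) r fun z hz => ?_
      · simpa using this
      obtain ⟨a, ha, rfl, rfl⟩ := hr z hz
      obtain ⟨h1, h2, h3, h4, h5, h6, h7, h8⟩ := hT a ha
      refine ⟨?_, sim_bound h6⟩
      have : n + a.2.1 - a.1 = a.2.2 := by rw [h1]; abel
      rw [this, ← h4, phiFn]; ring
    · calc _ ≤ (9 * (((2 ^ k₂ : ℕ) : ℝ) * ((2 ^ k₂ : ℕ) : ℝ))) * (C * ((2 : ℝ) ^ k₁) ^ ε) := by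
            gcongr
        _ = _ := by push_cast; ring
  · refine (fiber_bound T _ (fun t => t.2.1) (fun t => t.2.2) (C * ((2 : ℝ) ^ k₃) ^ ε)
      hf ?_ ?_).trans ?_
    · intro a ha b hb e1 e2
      have ha1 := (hT a ha).1
      have hb1 := (hT b hb).1
      refine Prod.ext ?_ (Prod.ext e1 e2)
      rw [show a.2.1 = b.2.1 from e1, show a.2.2 = b.2.2 from e2] at ha1
      exact sub_left_injective (add_left_injective _ (ha1.symm.trans hb1))
    · intro b _ r hr
      have := hC (2 ^ k₃) Nat.one_le_two_pow (nsq n + nsq b - m) (n + b) r fun z hz => ?_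
      · simpa using this
      obtain ⟨a, ha, rfl, rfl⟩ := hr z hz
      obtain ⟨h1, h2, h3, h4, h5, h6, h7, h8⟩ := hT a ha
      refine ⟨?_, sim_bound h8⟩
      have : n + a.2.1 - a.2.2 = a.1 := by rw [h1]; abel
      rw [this, ← h4, phiFn]; ring
    · calc _ ≤ (9 * (((2 ^ k₂ : ℕ) : ℝ) * ((2 ^ k₂ : ℕ) : ℝ))) * (C * ((2 : ℝ) ^ k₃) ^ ε) := by
            gcongr
        _ = _ := by push_cast; ring

theorem row_pair (ε : ℝ) (hε : 0 < ε) :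
    ∃ C : ℝ, 1 ≤ C ∧ ∀ (k k₁ k₂ k₃ : ℕ) (m : ℤ) (n : ℤ × ℤ)
      (T : Finset ((ℤ × ℤ) × (ℤ × ℤ) × (ℤ × ℤ))),
      (∀ t ∈ T, SMem (2 ^ k) (2 ^ k₁) (2 ^ k₂) (2 ^ k₃) m n t.1 t.2.1 t.2.2) →
      (T.card : ℝ) ≤ C * ((2 : ℝ) ^ k₁ * (2 : ℝ) ^ k₃) ^ (1 + ε) ∧
      (k₁ ≤ k₂ → (T.card : ℝ) ≤ C * ((2 : ℝ) ^ k₁ * (2 : ℝ) ^ k₂) ^ (1 + ε)) ∧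
      (k₃ ≤ k₂ → (T.card : ℝ) ≤ C * ((2 : ℝ) ^ k₂ * (2 : ℝ) ^ k₃) ^ (1 + ε)) := by
  obtain ⟨C, hC1, hC⟩ := pair_count ε hε
  have h2 : (1 : ℝ) ≤ (2 : ℝ) ^ (1 + ε) := Real.one_le_rpow (by norm_num) (by linarith)
  refine ⟨C * 2 ^ (1 + ε), one_le_mul_of_one_le_of_one_le hC1 h2,
    fun k k₁ k₂ k₃ m n T hT => ?_⟩
  have hP : ∀ L M : ℕ, 1 ≤ L → 1 ≤ M → ∀ c d : ℤ × ℤ,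
      (∀ t ∈ T, |(n - t.1).1 - c.1| ≤ L ∧ |(n - t.1).2 - c.2| ≤ L ∧
        |(n - t.2.2).1 - d.1| ≤ M ∧ |(n - t.2.2).2 - d.2| ≤ M) →
      (T.card : ℝ) ≤ C * ((L : ℝ) * M) ^ (1 + ε) := by
    intro L M hL hM c d hcd
    have hinj : Set.InjOn (fun t : (ℤ × ℤ) × (ℤ × ℤ) × (ℤ × ℤ) => (n - t.1, n - t.2.2)) T := by
      intro a ha b hb hab
      have e1 : a.1 = b.1 := sub_right_injective (congrArg Prod.fst hab)
      have e2 : a.2.2 = b.2.2 := sub_right_injective (congrArg Prod.snd hab)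
      have ha1 := (hT a ha).1
      have hb1 := (hT b hb).1
      refine Prod.ext e1 (Prod.ext ?_ e2)
      rw [e1, e2] at ha1
      exact sub_right_injective (add_left_injective _ (ha1.symm.trans hb1))
    rw [← Finset.card_image_of_injOn hinj]
    have hL' : (1 : ℝ) ≤ L := by exact_mod_cast hL
    have hM' : (1 : ℝ) ≤ M := by exact_mod_cast hM
    rw [Real.rpow_add (by positivity), Real.rpow_one]
    refine hC L M hL hM (m / 2) c d _ fun p hp => ?_
    obtain ⟨t, ht, rfl⟩ := Finset.mem_image.1 hp
    obtain ⟨h1, h2, h3, h4, h5, h6, h7, h8⟩ := hT t ht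
    obtain ⟨b1, b2, b3, b4⟩ := hcd t ht
    exact ⟨b1, b2, b3, b4, sub_ne_zero.2 h2, sub_ne_zero.2 h3, phi_eq h1 h4⟩
  refine ⟨?_, ?_, ?_⟩
  · have := hP (2 ^ k₁) (2 ^ k₃) Nat.one_le_two_pow Nat.one_le_two_pow n n fun t ht => ?_
    · push_cast at this
      refine this.trans ?_
      have : C ≤ C * 2 ^ (1 + ε) := le_mul_of_one_le_right (by linarith) h2
      gcongr
    · obtain ⟨h1, -, -, h4, h5, h6, h7, h8⟩ := hT t ht
      have b1 := sim_bound h6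
      have b3 := sim_bound h8
      simpa [abs_sub_comm] using And.intro b1.1 ⟨b1.2, b3.1, b3.2⟩
  · intro h12
    have := hP (2 ^ k₁) (2 * 2 ^ k₂) Nat.one_le_two_pow (by have := Nat.one_le_two_pow (n := k₂); omega) n 0
      fun t ht => ?_
    · push_cast at this
      refine this.trans (le_of_eq ?_)
      rw [show (2 : ℝ) ^ k₁ * (2 * 2 ^ k₂) = 2 * (2 ^ k₁ * 2 ^ k₂) by ring,
        Real.mul_rpow (by norm_num) (by positivity)]
      ring
    · obtain ⟨h1, -, -, h4, h5, h6, h7, h8⟩ := hT t ht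
      have b1 := sim_bound h6
      have b2 := sim_bound h7
      have hle : ((2 ^ k₁ : ℕ) : ℤ) ≤ ((2 ^ k₂ : ℕ) : ℤ) := by
        exact_mod_cast Nat.pow_le_pow_right (by norm_num) h12
      have e : n - t.2.2 = t.1 - t.2.1 := by rw [h1]; abel
      refine ⟨by simpa using b1.1, by simpa using b1.2, ?_, ?_⟩
      · rw [e]; simp only [Prod.fst_sub, Prod.fst_zero, sub_zero]
        refine (abs_sub _ _).trans ?_
        push_cast at *; linarith [b1.1, b2.1]
      · rw [e]; simp only [Prod.snd_sub, Prod.snd_zero, sub_zero]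
        refine (abs_sub _ _).trans ?_
        push_cast at *; linarith [b1.2, b2.2]
  · intro h12
    have := hP (2 * 2 ^ k₂) (2 ^ k₃) (by have := Nat.one_le_two_pow (n := k₂); omega) Nat.one_le_two_pow 0 n
      fun t ht => ?_
    · push_cast at this
      refine this.trans (le_of_eq ?_)
      rw [show (2 : ℝ) * 2 ^ k₂ * 2 ^ k₃ = 2 * (2 ^ k₂ * 2 ^ k₃) by ring,
        Real.mul_rpow (by norm_num) (by positivity)]
      ring
    · obtain ⟨h1, -, -, h4, h5, h6, h7, h8⟩ := hT t ht
      have b1 := sim_bound h8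
      have b2 := sim_bound h7
      have hle : ((2 ^ k₃ : ℕ) : ℤ) ≤ ((2 ^ k₂ : ℕ) : ℤ) := by
        exact_mod_cast Nat.pow_le_pow_right (by norm_num) h12
      have e : n - t.1 = t.2.2 - t.2.1 := by rw [h1]; abel
      refine ⟨?_, ?_, by simpa using b1.1, by simpa using b1.2⟩
      · rw [e]; simp only [Prod.fst_sub, Prod.fst_zero, sub_zero]
        refine (abs_sub _ _).trans ?_
        push_cast at *; linarith [b1.1, b2.1]
      · rw [e]; simp only [Prod.snd_sub, Prod.snd_zero, sub_zero]
        refine (abs_sub _ _).trans ?_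
        push_cast at *; linarith [b1.2, b2.2]

theorem dprod_cases (a b c : ℝ) :
    (dmed3 a b c * dmin3 a b c = a * c) ∨
    (a ≤ b ∧ dmed3 a b c * dmin3 a b c = a * b) ∨
    (c ≤ b ∧ dmed3 a b c * dmin3 a b c = b * c) ∨
    (b ≤ min a c ∧ dmed3 a b c * dmin3 a b c = b * min a c) := by
  unfold dmed3 dmin3 dmax3
  rcases le_total a b with h1 | h1 <;> rcases le_total b c with h2 | h2 <;>
    rcases le_total a c with h3 | h3
  · right; left; refine ⟨h1, ?_⟩; simp [*]; ring
  · have : a = c := by linarith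
    have : b = c := by linarith
    left; subst_vars; simp
  · left; simp [*]; ring
  · left; simp [*]; left; ring
  · right; right; right; refine ⟨by simp [*], ?_⟩; simp [*]; ring
  · right; right; right; refine ⟨by simp [*], ?_⟩; simp [*]; ring
  · have : a = c := by linarith
    have : b = c := by linarith
    left; subst_vars; simp
  · right; right; left; refine ⟨h2, ?_⟩; simp [*]; left; ring

theorem row_count (ε : ℝ) (hε : 0 < ε) :
    ∃ C : ℝ, 1 ≤ C ∧ ∀ (k k₁ k₂ k₃ : ℕ) (m : ℤ) (n : ℤ × ℤ)
      (T : Finset ((ℤ × ℤ) × (ℤ × ℤ) × (ℤ × ℤ))),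
      (∀ t ∈ T, SMem (2 ^ k) (2 ^ k₁) (2 ^ k₂) (2 ^ k₃) m n t.1 t.2.1 t.2.2) →
      (T.card : ℝ) ≤ C * (min ((2 : ℝ) ^ k₂ * (min ((2 : ℝ) ^ k₁) (2 ^ k₃)) ^ ε)
        ((dmed3 (2 ^ k₁) (2 ^ k₂) (2 ^ k₃) * dmin3 (2 ^ k₁) (2 ^ k₂) (2 ^ k₃)) ^
          ((1 : ℝ) / 2 + ε))) ^ 2 := by
  obtain ⟨C, hC1, hC⟩ := row_circ (2 * ε) (by positivity)
  obtain ⟨D, hD1, hD⟩ := row_pair (2 * ε) (by positivity)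
  refine ⟨max C D, hC1.trans (le_max_left _ _), fun k k₁ k₂ k₃ m n T hT => ?_⟩
  have hCm : C ≤ max C D := le_max_left _ _
  have hDm : D ≤ max C D := le_max_right _ _
  obtain ⟨c1, c3⟩ := hC k k₁ k₂ k₃ m n T hT
  obtain ⟨d13, d12, d32⟩ := hD k k₁ k₂ k₃ m n T hT
  have p1 : (1 : ℝ) ≤ 2 ^ k₁ := one_le_pow₀ (by norm_num)
  have p2 : (1 : ℝ) ≤ 2 ^ k₂ := one_le_pow₀ (by norm_num)
  have p3 : (1 : ℝ) ≤ 2 ^ k₃ := one_le_pow₀ (by norm_num)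
  have hk : ∀ i j : ℕ, (2 : ℝ) ^ i ≤ 2 ^ j → i ≤ j := fun i j h =>
    (pow_le_pow_iff_right₀ (by norm_num : (1 : ℝ) < 2)).1 h
  have hcirc : (T.card : ℝ) ≤
      C * (((2 : ℝ) ^ k₂) ^ 2 * (min ((2 : ℝ) ^ k₁) (2 ^ k₃)) ^ (2 * ε)) := by
    rcases min_choice ((2 : ℝ) ^ k₁) (2 ^ k₃) with h | h <;> rw [h]
    · exact c1
    · exact c3
  have hmn : (1 : ℝ) ≤ min ((2 : ℝ) ^ k₁) (2 ^ k₃) := le_min p1 p3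
  obtain ⟨P, hP⟩ : ∃ P : ℝ, P = dmed3 (2 ^ k₁) (2 ^ k₂) (2 ^ k₃) *
    dmin3 (2 ^ k₁) (2 ^ k₂) (2 ^ k₃) := ⟨_, rfl⟩
  rw [← hP]
  obtain ⟨mn, hmndef⟩ : ∃ mn : ℝ, mn = min ((2 : ℝ) ^ k₁) (2 ^ k₃) := ⟨_, rfl⟩
  rw [← hmndef] at hcirc hmn ⊢
  have hX : (T.card : ℝ) ≤ max C D * ((2 : ℝ) ^ k₂ * mn ^ ε) ^ 2 := by
    refine hcirc.trans ?_
    rw [mul_pow, ← Real.rpow_natCast (mn ^ ε), ← Real.rpow_mul (by linarith)]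
    rw [show ε * ((2 : ℕ) : ℝ) = 2 * ε by push_cast; ring]
    gcongr
  have hPpos : 0 ≤ P ∧ (T.card : ℝ) ≤ max C D * P ^ (1 + 2 * ε) := by
    have hcase := dprod_cases ((2 : ℝ) ^ k₁) (2 ^ k₂) (2 ^ k₃)
    rw [← hP, ← hmndef] at hcase
    rcases hcase with h | ⟨h', h⟩ | ⟨h', h⟩ | ⟨h', h⟩
    · rw [h]
      exact ⟨by positivity, d13.trans (by gcongr)⟩
    · rw [h]
      exact ⟨by positivity, (d12 (hk _ _ h')).trans (by gcongr)⟩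
    · rw [h]
      exact ⟨by positivity, (d32 (hk _ _ h')).trans (by gcongr)⟩
    · rw [h]
      refine ⟨by positivity, hcirc.trans ?_⟩
      have e1 : ((2 : ℝ) ^ k₂ * mn) ^ (1 + 2 * ε) =
          (2 ^ k₂ * mn) * ((2 ^ k₂ : ℝ) ^ (2 * ε) * mn ^ (2 * ε)) := by
        rw [Real.rpow_add (by positivity), Real.rpow_one,
          Real.mul_rpow (by positivity) (by positivity)]
      rw [e1]
      have h1 : (1 : ℝ) ≤ (2 ^ k₂ : ℝ) ^ (2 * ε) := Real.one_le_rpow p2 (by positivity)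
      have h2 : mn ^ (2 * ε) ≤ (2 ^ k₂ : ℝ) ^ (2 * ε) * mn ^ (2 * ε) :=
        le_mul_of_one_le_left (by positivity) h1
      have h3 : ((2 : ℝ) ^ k₂) ^ 2 ≤ 2 ^ k₂ * mn := by
        rw [sq]; gcongr
      gcongr
  have hY : (T.card : ℝ) ≤ max C D * (P ^ ((1 : ℝ) / 2 + ε)) ^ 2 := by
    refine hPpos.2.trans (le_of_eq ?_)
    rw [← Real.rpow_natCast (P ^ ((1 : ℝ) / 2 + ε)), ← Real.rpow_mul hPpos.1]
    congr 2
    push_cast; ring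
  rcases min_choice ((2 : ℝ) ^ k₂ * mn ^ ε) (P ^ ((1 : ℝ) / 2 + ε)) with h | h <;> rw [h]
  · exact hX
  · exact hY

theorem exists_box : ∃ bx : ℕ → Finset (ℤ × ℤ),
    ∀ (j : ℕ) (x : ℤ × ℤ), simDyadic (2 ^ j) x → x ∈ bx j :=
  ⟨fun j => (Finset.Icc ((0 : ℤ) - (2 ^ j : ℕ)) (0 + (2 ^ j : ℕ))) ×ˢ
        (Finset.Icc ((0 : ℤ) - (2 ^ j : ℕ)) (0 + (2 ^ j : ℕ))), fun _ _ hx =>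
      Finset.mem_product.2 ⟨mem_box (by simpa using (sim_bound hx).1),
        mem_box (by simpa using (sim_bound hx).2)⟩⟩

theorem stmt12 (ε : ℝ) (hε : 0 < ε) :
    ∃ C : ℝ, 0 < C ∧ ∀ N N₁ N₂ N₃ : ℝ,
      IsDyadic N → IsDyadic N₁ → IsDyadic N₂ → IsDyadic N₃ → ∀ m : ℤ,
      ∀ f : (ℤ × ℤ) × (ℤ × ℤ) × (ℤ × ℤ) → ℝ, Summable (fun t => f t ^ 2) →
        Real.sqrt (∑' n : ℤ × ℤ,
            (∑' t : (ℤ × ℤ) × (ℤ × ℤ) × (ℤ × ℤ),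
              hten N N₁ N₂ N₃ m n t.1 t.2.1 t.2.2 * f t) ^ 2) ≤
          C * min (N₂ * (min N₁ N₃) ^ ε)
                  ((dmed3 N₁ N₂ N₃ * dmin3 N₁ N₂ N₃) ^ ((1 : ℝ) / 2 + ε)) *
            Real.sqrt (∑' t : (ℤ × ℤ) × (ℤ × ℤ) × (ℤ × ℤ), f t ^ 2) := by
  obtain ⟨C, hC1, hC⟩ := row_count ε hε
  refine ⟨C, by linarith, ?_⟩
  rintro N N₁ N₂ N₃ ⟨k, rfl⟩ ⟨k₁, rfl⟩ ⟨k₂, rfl⟩ ⟨k₃, rfl⟩ m f hf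
  have hdm : (0 : ℝ) ≤ dmed3 (2 ^ k₁) (2 ^ k₂) (2 ^ k₃) * dmin3 (2 ^ k₁) (2 ^ k₂) (2 ^ k₃) := by
    rcases dprod_cases ((2 : ℝ) ^ k₁) (2 ^ k₂) (2 ^ k₃) with h | ⟨-, h⟩ | ⟨-, h⟩ | ⟨-, h⟩ <;>
      rw [h] <;> positivity
  obtain ⟨S, hS⟩ : ∃ S : (ℤ × ℤ) → (ℤ × ℤ) × (ℤ × ℤ) × (ℤ × ℤ) → Prop, S =
    (fun n t => SMem (2 ^ k) (2 ^ k₁) (2 ^ k₂) (2 ^ k₃) m n t.1 t.2.1 t.2.2) := ⟨_, rfl⟩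
  obtain ⟨h, hh⟩ : ∃ h : (ℤ × ℤ) → (ℤ × ℤ) × (ℤ × ℤ) × (ℤ × ℤ) → ℝ, h =
    (fun n t => hten (2 ^ k) (2 ^ k₁) (2 ^ k₂) (2 ^ k₃) m n t.1 t.2.1 t.2.2) := ⟨_, rfl⟩
  have key := op_bound S h ?_ ?_ ?_ ?_ (C * min ((2 : ℝ) ^ k₂ * (min ((2 : ℝ) ^ k₁) (2 ^ k₃)) ^ ε)
        ((dmed3 (2 ^ k₁) (2 ^ k₂) (2 ^ k₃) * dmin3 (2 ^ k₁) (2 ^ k₂) (2 ^ k₃)) ^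
          ((1 : ℝ) / 2 + ε))) ?_ ?_ f hf
  · rw [hh] at key
    exact key
  · intro n t ht
    rw [hS] at ht
    rw [hh]
    exact if_pos ht
  · intro n t ht
    rw [hS] at ht
    rw [hh]
    exact if_neg ht
  · intro t n n' ht ht'
    rw [hS] at ht ht'
    exact ht.1.trans ht'.1.symm
  · intro n
    obtain ⟨bx, hbx⟩ := exists_box
    refine (Finset.finite_toSet (bx k₁ ×ˢ bx k₂ ×ˢ bx k₃)).subset ?_
    intro t ht
    rw [hS] at ht
    obtain ⟨-, -, -, -, -, h1, h2, h3⟩ := ht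
    exact Finset.mem_coe.2 (Finset.mem_product.2
      ⟨hbx _ _ h1, Finset.mem_product.2 ⟨hbx _ _ h2, hbx _ _ h3⟩⟩)
  · have : (0 : ℝ) ≤ min ((2 : ℝ) ^ k₂ * (min ((2 : ℝ) ^ k₁) (2 ^ k₃)) ^ ε)
        ((dmed3 (2 ^ k₁) (2 ^ k₂) (2 ^ k₃) * dmin3 (2 ^ k₁) (2 ^ k₂) (2 ^ k₃)) ^
          ((1 : ℝ) / 2 + ε)) := by
      refine le_min (by positivity) (Real.rpow_nonneg hdm _)
    exact mul_nonneg (by linarith) this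
  · intro n T hT
    rw [hS] at hT
    refine (hC k k₁ k₂ k₃ m n T hT).trans ?_
    rw [mul_pow]
    refine mul_le_mul_of_nonneg_right ?_ (sq_nonneg _)
    exact le_self_pow₀ hC1 (by norm_num)
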